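/- Let 0 < x ≤ π and 0 < a ≤ π, let M ≥ 0 and η ≥ 0, and let ψ : [0,π] → ℝ be a measurable nonnegative function satisfying ψ(θ) ≤ (a/x)·θ for all θ ∈ [0,x]. If ∫₀^π max(a − ψ(θ), 0)·sin θ dθ ≤ M·(a − sin a) + η, then M·(sin a)/a − (M − 1 + η/a) ≤ (sin x)/x. -/

import Mathlib

open Real MeasureTheory Set

/-- The integral of the linear tent `a - (a / x) θ` against `sin θ dθ` over `[0, x]`. -/
lemma integral_sub_div_mul_mul_sin (x a : ℝ) (hx : x ≠ 0) :
    ∫ θ in (0:ℝ)..x, (a - a / x * θ) * Real.sin θ = a * (1 - Real.sin x / x) := by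
  have hderiv : ∀ θ ∈ uIcc 0 x, HasDerivAt
      (fun θ => -((a - a / x * θ) * Real.cos θ) - a / x * Real.sin θ)
      ((a - a / x * θ) * Real.sin θ) θ := by
    intro θ _
    have hlin : HasDerivAt (fun θ : ℝ => a - a / x * θ) (-(a / x * 1)) θ :=
      ((hasDerivAt_id θ).const_mul (a / x)).const_sub a
    exact ((hlin.mul (Real.hasDerivAt_cos θ)).neg.sub
      ((Real.hasDerivAt_sin θ).const_mul (a / x))).congr_deriv (by ring)
  rw [intervalIntegral.integral_eq_sub_of_hasDerivAt hderiv
    (Continuous.intervalIntegrable (by fun_prop) _ _)]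
  simp only [Real.cos_zero, Real.sin_zero]
  field_simp
  ring

/-- A measurable function that is nonnegative on `[0, π]` has an integrable truncated deficit
`max (a - ψ θ) 0` against `sin θ dθ`. -/
lemma intervalIntegrable_max_sub_mul_sin {a : ℝ} (ha : 0 ≤ a) {ψ : ℝ → ℝ} (hmeas : Measurable ψ)
    (hnonneg : ∀ θ ∈ Icc (0:ℝ) π, 0 ≤ ψ θ) :
    IntervalIntegrable (fun θ => max (a - ψ θ) 0 * Real.sin θ) volume 0 π := by
  refine (intervalIntegrable_const (c := a)).mono_fun (by fun_prop) ?_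
  filter_upwards [ae_restrict_mem measurableSet_uIoc] with θ hθ
  rw [uIoc_of_le Real.pi_pos.le] at hθ
  have hψ := hnonneg θ (Ioc_subset_Icc_self hθ)
  rw [norm_mul, Real.norm_of_nonneg (le_max_right _ _), Real.norm_of_nonneg ha]
  have hmax : max (a - ψ θ) 0 ≤ a := max_le (by linarith) ha
  calc max (a - ψ θ) 0 * ‖Real.sin θ‖ ≤ a * 1 :=
        mul_le_mul hmax (Real.abs_sin_le_one θ) (norm_nonneg _) ha
    _ = a := mul_one a

/-- If `ψ θ ≤ (a / x) θ` on `[0, x]`, the truncated deficit of `ψ` below `a` is at least that of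
the linear function. -/
lemma le_integral_max_sub_mul_sin {x a : ℝ} (hx : 0 < x) (hxπ : x ≤ π) (ha : 0 ≤ a)
    {ψ : ℝ → ℝ} (hmeas : Measurable ψ) (hnonneg : ∀ θ ∈ Icc (0:ℝ) π, 0 ≤ ψ θ)
    (hle : ∀ θ ∈ Icc (0:ℝ) x, ψ θ ≤ (a / x) * θ) :
    a * (1 - Real.sin x / x) ≤ ∫ θ in (0:ℝ)..π, max (a - ψ θ) 0 * Real.sin θ := by
  have hI := intervalIntegrable_max_sub_mul_sin ha hmeas hnonneg
  have hsin : ∀ θ ∈ Icc (0:ℝ) π, 0 ≤ max (a - ψ θ) 0 * Real.sin θ := fun θ hθ =>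
    mul_nonneg (le_max_right _ _) (Real.sin_nonneg_of_mem_Icc hθ)
  have hIx : IntervalIntegrable (fun θ => max (a - ψ θ) 0 * Real.sin θ) volume 0 x :=
    hI.mono_set (by
      rw [uIcc_of_le hx.le, uIcc_of_le Real.pi_pos.le]
      exact Icc_subset_Icc_right hxπ)
  calc a * (1 - Real.sin x / x) = ∫ θ in (0:ℝ)..x, (a - a / x * θ) * Real.sin θ :=
        (integral_sub_div_mul_mul_sin x a hx.ne').symm
    _ ≤ ∫ θ in (0:ℝ)..x, max (a - ψ θ) 0 * Real.sin θ := by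
        refine intervalIntegral.integral_mono_on hx.le
          (Continuous.intervalIntegrable (by fun_prop) _ _) hIx fun θ hθ => ?_
        refine mul_le_mul_of_nonneg_right (le_max_of_le_left ?_)
          (Real.sin_nonneg_of_mem_Icc ⟨hθ.1, hθ.2.trans hxπ⟩)
        linarith [hle θ hθ]
    _ ≤ ∫ θ in (0:ℝ)..π, max (a - ψ θ) 0 * Real.sin θ := by
        refine intervalIntegral.integral_mono_interval le_rfl hx.le hxπ ?_ hI
        filter_upwards [ae_restrict_mem measurableSet_Ioc] with θ hθ
        exact hsin θ (Ioc_subset_Icc_self hθ)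

/-- If a measurable nonnegative `ψ` on `[0,π]` satisfies `ψ θ ≤ (a/x)·θ` on `[0,x]` and
`∫₀^π max(a - ψ θ, 0) sin θ dθ ≤ M (a - sin a) + η`, then
`M (sin a)/a - (M - 1 + η/a) ≤ (sin x)/x`. -/
theorem rearranged_inequality (x a M η : ℝ)
    (hx : 0 < x) (hxπ : x ≤ π) (ha : 0 < a) (haπ : a ≤ π)
    (hM : 0 ≤ M) (hη : 0 ≤ η)
    (ψ : ℝ → ℝ)
    (hmeas : Measurable ψ)
    (hnonneg : ∀ θ ∈ Icc (0:ℝ) π, 0 ≤ ψ θ)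
    (hle : ∀ θ ∈ Icc (0:ℝ) x, ψ θ ≤ (a / x) * θ)
    (hint : (∫ θ in (0:ℝ)..π, max (a - ψ θ) 0 * Real.sin θ) ≤ M * (a - Real.sin a) + η) :
    M * (Real.sin a / a) - (M - 1 + η / a) ≤ Real.sin x / x := by
  have hlower := (le_integral_max_sub_mul_sin hx hxπ ha.le hmeas hnonneg hle).trans hint
  refine le_of_mul_le_mul_left ?_ ha
  have hscale : a * (M * (Real.sin a / a) - (M - 1 + η / a)) =
      M * Real.sin a - a * M + a - η := by
    field_simp
    ring
  rw [hscale]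
  linarith
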